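/- For all α, β, γ > 0, b(α,β,γ) + b(γ,β,α) ≥ 0.08 · β · (log(αγ/β²))², where b(α,β,γ) := ∂₁θ_log(β,γ)·α + ∂₂θ_log(β,γ)·β − θ_log(α,β). -/

import Mathlib

/-!
Put `a = b * exp (m + d)` and `c = b * exp (m - d)`. Differentiating the logarithmic mean under the
integral sign gives `bfun a b c = b * ∫ p in 0..1, exp (p * d) * G p`, where `G p ≥ 0` is a Jensen
gap of `exp` that does not depend on `d`. Adding the term with `d` replaced by `-d` produces the
weight `2 * cosh (p * d) ≥ 2`, so for given `m` the sum is smallest at `d = 0`, where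
`a = c = b * exp m`. There `∫ p in 0..1, G p = 2 * (exp m - 1) * (sinh m - m) / m ^ 2`, and the
claim becomes `0.08 * m ^ 4 ≤ (exp m - 1) * (sinh m - m)`, which follows from Taylor polynomials of
`exp` and `sinh`.
-/

open Real

noncomputable def thetaLog (r s : ℝ) : ℝ := ∫ p in (0:ℝ)..1, r ^ (1 - p) * s ^ p

noncomputable def dtheta1 (r s : ℝ) : ℝ := deriv (fun u : ℝ => thetaLog u s) r

noncomputable def dtheta2 (r s : ℝ) : ℝ := deriv (fun v : ℝ => thetaLog r v) s

noncomputable def bfun (a b c : ℝ) : ℝ := dtheta1 b c * a + dtheta2 b c * b - thetaLog a b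

noncomputable def b0fun (a b c : ℝ) : ℝ := dtheta1 b c * a + dtheta2 b c * b

lemma sum_le_sinh_of_nonneg {x : ℝ} (hx : 0 ≤ x) (n : ℕ) :
    ∑ i ∈ Finset.range n, x ^ (2 * i + 1) / (2 * i + 1).factorial ≤ sinh x :=
  sum_le_hasSum _ (fun _ _ => by positivity) (hasSum_sinh x)

lemma mul_taylor_exp_le_mul_taylor_sinh {x : ℝ} (hx : 0 ≤ x) :
    0.08 * x * (1 + x + x ^ 2 / 2 + x ^ 3 / 6 + x ^ 4 / 24) ≤
      (x + x ^ 2 / 2 + x ^ 3 / 6 + x ^ 4 / 24) * (1 / 6 + x ^ 2 / 120 + x ^ 4 / 5040) := by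
  -- `604800 / x` times the difference of the two sides is a polynomial with its minimum on `0 ≤ x`
  -- near `3`; dividing it by `(x - 3) ^ 2` gives positive coefficients in quotient and remainder.
  have hgap : 0 ≤ x * ((x - 3) ^ 2 *
      (5622 + 3795 * x + 1644 * x ^ 2 + 525 * x ^ 3 + 50 * x ^ 4 + 5 * x ^ 5) +
        1593 * x + 1818) := by
    positivity
  linarith

lemma pow_four_le_one_sub_exp_neg_mul_sinh_sub {x : ℝ} (hx : 0 ≤ x) :
    0.08 * x ^ 4 ≤ (1 - exp (-x)) * (sinh x - x) := by
  set T := 1 + x + x ^ 2 / 2 + x ^ 3 / 6 + x ^ 4 / 24 with hT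
  set P := 1 / 6 + x ^ 2 / 120 + x ^ 4 / 5040 with hP
  have hTpos : 0 < T := by positivity
  have hexp : T ≤ exp x :=
    calc T = ∑ i ∈ Finset.range 5, x ^ i / i.factorial := by
          simp [hT, Finset.sum_range_succ, Nat.factorial]
      _ ≤ exp x := sum_le_exp_of_nonneg hx 5
  have hexp_neg : (T - 1) / T ≤ 1 - exp (-x) := by
    rw [exp_neg, sub_div, div_self hTpos.ne', one_div]
    gcongr
  have hsinh : x ^ 3 * P ≤ sinh x - x := le_sub_iff_add_le.2 <|
    calc x ^ 3 * P + x = ∑ i ∈ Finset.range 4, x ^ (2 * i + 1) / (2 * i + 1).factorial := by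
          simp only [hP, Finset.sum_range_succ, Finset.sum_range_zero, Nat.factorial]
          push_cast
          ring
      _ ≤ sinh x := sum_le_sinh_of_nonneg hx 4
  have hpoly : 0.08 * x ≤ (T - 1) / T * P := by
    rw [div_mul_eq_mul_div, le_div_iff₀ hTpos,
      show T - 1 = x + x ^ 2 / 2 + x ^ 3 / 6 + x ^ 4 / 24 by rw [hT]; ring]
    exact mul_taylor_exp_le_mul_taylor_sinh hx
  calc 0.08 * x ^ 4 = x ^ 3 * (0.08 * x) := by ring
    _ ≤ x ^ 3 * ((T - 1) / T * P) := by gcongr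
    _ = (T - 1) / T * (x ^ 3 * P) := by ring
    _ ≤ (1 - exp (-x)) * (sinh x - x) :=
        mul_le_mul hexp_neg hsinh (by positivity) (by simpa using hx)

lemma pow_four_le_exp_sub_one_mul_sinh_sub (x : ℝ) :
    0.08 * x ^ 4 ≤ (exp x - 1) * (sinh x - x) := by
  rcases le_total 0 x with hx | hx
  · have hsub : 0 ≤ sinh x - x := sub_nonneg.2 (self_le_sinh_iff.2 hx)
    have hexp : 1 - exp (-x) ≤ exp x - 1 := by linarith [one_le_cosh x, cosh_eq x]
    exact (pow_four_le_one_sub_exp_neg_mul_sinh_sub hx).trans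
      (mul_le_mul_of_nonneg_right hexp hsub)
  · have := pow_four_le_one_sub_exp_neg_mul_sinh_sub (neg_nonneg.2 hx)
    rw [neg_neg, sinh_neg] at this
    linarith

/-- The gap in Jensen's inequality for `exp` with weights `p` and `1 - p` at the points
`(2 - p) * m` and `-p * m`, whose weighted mean is `p * m`. It is the integrand of
`bfun (b * exp m) b (b * exp m)` divided by `b`. -/
noncomputable def expJensenGap (m p : ℝ) : ℝ :=
  p * exp ((2 - p) * m) + (1 - p) * exp (-p * m) - exp (p * m)

lemma continuous_expJensenGap (m : ℝ) : Continuous (expJensenGap m) := by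
  unfold expJensenGap
  fun_prop

lemma expJensenGap_nonneg (m : ℝ) {p : ℝ} (hp : p ∈ Set.Icc (0 : ℝ) 1) :
    0 ≤ expJensenGap m p := by
  have hconv := convexOn_exp.2 (Set.mem_univ ((2 - p) * m)) (Set.mem_univ (-p * m)) hp.1
    (sub_nonneg.2 hp.2) (by ring)
  simp only [smul_eq_mul] at hconv
  rw [show p * ((2 - p) * m) + (1 - p) * (-p * m) = p * m by ring] at hconv
  exact sub_nonneg.2 hconv

lemma hasDerivAt_expJensenGap_primitive {m : ℝ} (hm : m ≠ 0) (p : ℝ) :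
    HasDerivAt (fun p => (-p / m - 1 / m ^ 2) * exp ((2 - p) * m) +
        (-1 / m + p / m + 1 / m ^ 2) * exp (-p * m) - exp (p * m) / m)
      (expJensenGap m p) p := by
  have hid := hasDerivAt_id p
  have hleft := ((hid.neg.div_const m).sub_const (1 / m ^ 2)).mul
    ((hid.const_sub 2).mul_const m).exp
  have hright := (((hid.div_const m).const_add (-1 / m)).add_const (1 / m ^ 2)).mul
    (hid.neg.mul_const m).exp
  have hmean := (hid.mul_const m).exp.div_const m
  refine ((hleft.add hright).sub hmean).congr_deriv ?_
  simp only [id, Pi.neg_apply, expJensenGap]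
  field_simp
  ring

lemma integral_expJensenGap {m : ℝ} (hm : m ≠ 0) :
    ∫ p in (0 : ℝ)..1, expJensenGap m p = 2 * ((exp m - 1) * (sinh m - m)) / m ^ 2 := by
  rw [intervalIntegral.integral_eq_sub_of_hasDerivAt
    (fun p _ => hasDerivAt_expJensenGap_primitive hm p)
    ((continuous_expJensenGap m).intervalIntegrable _ _)]
  have hsq : exp ((2 - 0) * m) = exp m * exp m := by rw [← exp_add]; ring_nf
  have hone : exp ((2 - 1) * m) = exp m := by ring_nf
  have hinv : exp (-1 * m) = (exp m)⁻¹ := by rw [← exp_neg]; ring_nf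
  rw [hsq, hone, hinv, sinh_eq, exp_neg]
  simp only [one_mul, zero_mul, neg_zero, exp_zero]
  field_simp
  ring

lemma sq_le_integral_expJensenGap (m : ℝ) :
    0.16 * m ^ 2 ≤ ∫ p in (0 : ℝ)..1, expJensenGap m p := by
  rcases eq_or_ne m 0 with rfl | hm
  · simp [expJensenGap]
  · rw [integral_expJensenGap hm, le_div_iff₀ (by positivity)]
    linarith [pow_four_le_exp_sub_one_mul_sinh_sub m]

lemma integral_expJensenGap_le_integral_cosh_mul (m d : ℝ) :
    ∫ p in (0 : ℝ)..1, expJensenGap m p ≤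
      ∫ p in (0 : ℝ)..1, cosh (p * d) * expJensenGap m p := by
  have hgap := continuous_expJensenGap m
  exact intervalIntegral.integral_mono_on zero_le_one (hgap.intervalIntegrable _ _)
    ((by fun_prop : Continuous _).intervalIntegrable _ _) fun p hp =>
      le_mul_of_one_le_left (expJensenGap_nonneg m hp) (one_le_cosh _)

section ParametricIntegral

open Filter Topology MeasureTheory

lemma hasDerivAt_integral_of_continuousOn_deriv {E : Type*} [NormedAddCommGroup E]
    [NormedSpace ℝ E] {F F' : ℝ → ℝ → E} {a b x : ℝ} {U : Set ℝ} (hU : U ∈ 𝓝 x)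
    (hF : ∀ y ∈ U, ContinuousOn (F y) (Set.uIcc a b))
    (hF' : ContinuousOn (Function.uncurry F') (U ×ˢ Set.uIcc a b))
    (hderiv : ∀ p ∈ Set.uIcc a b, ∀ y ∈ U, HasDerivAt (F · p) (F' y p) y) :
    HasDerivAt (fun y => ∫ p in a..b, F y p) (∫ p in a..b, F' x p) x := by
  obtain ⟨ε, hε, hball⟩ := Metric.nhds_basis_closedBall.mem_iff.1 hU
  have hxU : x ∈ U := mem_of_mem_nhds hU
  have hF'x : ContinuousOn (F' x) (Set.uIcc a b) :=
    hF'.comp (by fun_prop : ContinuousOn (fun p => (x, p)) _) fun p hp => ⟨hxU, hp⟩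
  obtain ⟨C, hC⟩ := ((isCompact_closedBall x ε).prod isCompact_uIcc).exists_bound_of_continuousOn
    (hF'.mono (Set.prod_mono_left hball))
  refine (intervalIntegral.hasDerivAt_integral_of_dominated_loc_of_deriv_le
    (bound := fun _ => C) (Metric.closedBall_mem_nhds x hε) ?_ (hF x hxU).intervalIntegrable
    ?_ ?_ intervalIntegrable_const ?_).2
  · filter_upwards [hU] with y hy
    exact ((hF y hy).mono Set.uIoc_subset_uIcc).aestronglyMeasurable measurableSet_uIoc
  · exact (hF'x.mono Set.uIoc_subset_uIcc).aestronglyMeasurable measurableSet_uIoc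
  · exact .of_forall fun p hp y hy => hC (y, p) ⟨hy, Set.uIoc_subset_uIcc hp⟩
  · exact .of_forall fun p hp y hy => hderiv p (Set.uIoc_subset_uIcc hp) y (hball hy)

lemma hasDerivAt_integral_mul_rpow {f w : ℝ → ℝ} {a b x : ℝ} (hf : ContinuousOn f (Set.uIcc a b))
    (hw : ContinuousOn w (Set.uIcc a b)) (hx : 0 < x) :
    HasDerivAt (fun y => ∫ p in a..b, f p * y ^ w p)
      (∫ p in a..b, f p * (w p * x ^ (w p - 1))) x := by
  refine hasDerivAt_integral_of_continuousOn_deriv (F := fun y p => f p * y ^ w p)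
    (F' := fun y p => f p * (w p * y ^ (w p - 1))) (Ioi_mem_nhds hx) (fun y hy => ?_) ?_
    fun p _ y hy => (hasDerivAt_rpow_const (.inl (ne_of_gt hy))).const_mul _
  · exact hf.mul (continuousOn_const.rpow hw fun _ _ => .inl (ne_of_gt hy))
  · have hf₂ := hf.comp continuousOn_snd (fun z (hz : z ∈ Set.Ioi (0 : ℝ) ×ˢ _) => hz.2)
    have hw₂ := hw.comp continuousOn_snd (fun z (hz : z ∈ Set.Ioi (0 : ℝ) ×ˢ _) => hz.2)
    exact hf₂.mul (hw₂.mul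
      (continuousOn_fst.rpow (hw₂.sub continuousOn_const) fun z hz => .inl (ne_of_gt hz.1)))

end ParametricIntegral

lemma thetaLog_eq_integral_rpow_mul_rpow_one_sub (r s : ℝ) :
    thetaLog r s = ∫ p in (0 : ℝ)..1, r ^ p * s ^ (1 - p) := by
  have hreflect := intervalIntegral.integral_comp_sub_left (a := 0) (b := 1)
    (fun p : ℝ => r ^ p * s ^ (1 - p)) 1
  simpa only [thetaLog, sub_self, sub_zero, sub_sub_cancel] using hreflect

lemma thetaLog_eq_mul_integral_div_rpow {r s : ℝ} (hr : 0 < r) (hs : 0 < s) :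
    thetaLog r s = s * ∫ p in (0 : ℝ)..1, (r / s) ^ p := by
  rw [thetaLog_eq_integral_rpow_mul_rpow_one_sub, ← intervalIntegral.integral_const_mul]
  congr 1 with p
  rw [div_rpow hr.le hs.le, rpow_sub hs, rpow_one]
  ring

lemma dtheta1_eq_integral {r s : ℝ} (hr : 0 < r) (hs : 0 < s) :
    dtheta1 r s = ∫ p in (0 : ℝ)..1, p * (s / r) ^ (1 - p) := by
  have hcont : Continuous fun p : ℝ => s ^ (1 - p) := by fun_prop (disch := exact hs.ne')
  have hderiv := hasDerivAt_integral_mul_rpow (a := 0) (b := 1) (w := fun p => p)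
    hcont.continuousOn continuousOn_id hr
  have hθ : (fun u => thetaLog u s) = fun u => ∫ p in (0 : ℝ)..1, s ^ (1 - p) * u ^ p := by
    simp only [thetaLog_eq_integral_rpow_mul_rpow_one_sub, mul_comm]
  rw [dtheta1, hθ, hderiv.deriv]
  congr 1 with p
  rw [div_rpow hs.le hr.le, ← neg_sub 1 p, rpow_neg hr.le]
  ring

lemma dtheta2_eq_integral {r s : ℝ} (hr : 0 < r) (hs : 0 < s) :
    dtheta2 r s = ∫ p in (0 : ℝ)..1, (1 - p) * (r / s) ^ p := by
  have hcont : Continuous fun p : ℝ => r ^ p := by fun_prop (disch := exact hr.ne')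
  have hderiv := hasDerivAt_integral_mul_rpow (a := 0) (b := 1) (w := fun p => 1 - p)
    hcont.continuousOn (by fun_prop) hs
  simp only [dtheta2, thetaLog_eq_integral_rpow_mul_rpow_one_sub]
  rw [hderiv.deriv]
  congr 1 with p
  rw [div_rpow hr.le hs.le, sub_sub_cancel_left, rpow_neg hs.le]
  ring

lemma bfun_eq_mul_integral {a b c : ℝ} (ha : 0 < a) (hb : 0 < b) (hc : 0 < c) :
    bfun a b c = b * ∫ p in (0 : ℝ)..1,
      (a / b * (p * (c / b) ^ (1 - p)) + (1 - p) * (b / c) ^ p - (a / b) ^ p) := by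
  have hab : a / b ≠ 0 := by positivity
  have hbc : b / c ≠ 0 := by positivity
  have hcb : c / b ≠ 0 := by positivity
  rw [intervalIntegral.integral_sub, intervalIntegral.integral_add,
    intervalIntegral.integral_const_mul, ← dtheta1_eq_integral hb hc, ← dtheta2_eq_integral hb hc,
    mul_sub, ← thetaLog_eq_mul_integral_div_rpow ha hb, bfun]
  · field_simp
  all_goals
    refine Continuous.intervalIntegrable ?_ _ _
    fun_prop (disch := assumption)

lemma bfun_mul_exp {b : ℝ} (hb : 0 < b) (m d : ℝ) :
    bfun (b * exp (m + d)) b (b * exp (m - d)) =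
      b * ∫ p in (0 : ℝ)..1, exp (p * d) * expJensenGap m p := by
  rw [bfun_eq_mul_integral (by positivity) hb (by positivity)]
  congr 2 with p
  rw [mul_div_cancel_left₀ _ hb.ne', mul_div_cancel_left₀ _ hb.ne', div_mul_cancel_left₀ hb.ne',
    ← exp_neg, ← exp_mul, ← exp_mul, ← exp_mul, expJensenGap]
  have hleft : exp (m + d) * exp ((m - d) * (1 - p)) = exp (p * d) * exp ((2 - p) * m) := by
    rw [← exp_add, ← exp_add]; ring_nf
  have hright : exp (-(m - d) * p) = exp (p * d) * exp (-p * m) := by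
    rw [← exp_add]; ring_nf
  have hmean : exp ((m + d) * p) = exp (p * d) * exp (p * m) := by
    rw [← exp_add]; ring_nf
  linear_combination p * hleft + (1 - p) * hright - hmean

lemma bfun_mul_exp_self {b : ℝ} (hb : 0 < b) (m : ℝ) :
    bfun (b * exp m) b (b * exp m) = b * ∫ p in (0 : ℝ)..1, expJensenGap m p := by
  simpa using bfun_mul_exp hb m 0

lemma bfun_mul_exp_add_swap {b : ℝ} (hb : 0 < b) (m d : ℝ) :
    bfun (b * exp (m + d)) b (b * exp (m - d)) + bfun (b * exp (m - d)) b (b * exp (m + d)) =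
      2 * (b * ∫ p in (0 : ℝ)..1, cosh (p * d) * expJensenGap m p) := by
  have hswap := bfun_mul_exp hb m (-d)
  rw [sub_neg_eq_add, ← sub_eq_add_neg] at hswap
  have hgap := continuous_expJensenGap m
  rw [bfun_mul_exp hb, hswap, ← mul_add, ← intervalIntegral.integral_add, mul_left_comm,
    ← intervalIntegral.integral_const_mul 2]
  · congr 2 with p
    rw [cosh_eq, mul_neg]
    ring
  all_goals exact (by fun_prop : Continuous _).intervalIntegrable _ _

lemma exists_mul_exp_eq {a b : ℝ} (hb : 0 < b) (ha : 0 < a) : ∃ x, b * exp x = a :=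
  ⟨log (a / b), by rw [exp_log (by positivity)]; field_simp⟩

lemma two_mul_bfun_sqrt_le {a b c : ℝ} (ha : 0 < a) (hb : 0 < b) (hc : 0 < c) :
    2 * bfun √(a * c) b √(a * c) ≤ bfun a b c + bfun c b a := by
  obtain ⟨x, rfl⟩ := exists_mul_exp_eq hb ha
  obtain ⟨z, rfl⟩ := exists_mul_exp_eq hb hc
  obtain ⟨m, d, rfl, rfl⟩ : ∃ m d, m + d = x ∧ m - d = z :=
    ⟨(x + z) / 2, (x - z) / 2, by ring, by ring⟩
  have hsq : b * exp (m + d) * (b * exp (m - d)) = (b * exp m) ^ 2 := by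
    rw [exp_add, exp_sub]
    field_simp
  rw [hsq, sqrt_sq (by positivity), bfun_mul_exp_self hb, bfun_mul_exp_add_swap hb]
  gcongr
  exact integral_expJensenGap_le_integral_cosh_mul m d

lemma mul_log_sq_le_bfun_self {a b : ℝ} (ha : 0 < a) (hb : 0 < b) :
    0.16 * b * log (a / b) ^ 2 ≤ bfun a b a := by
  obtain ⟨m, rfl⟩ := exists_mul_exp_eq hb ha
  rw [mul_div_cancel_left₀ _ hb.ne', log_exp, bfun_mul_exp_self hb, mul_comm 0.16 b, mul_assoc]
  gcongr
  exact sq_le_integral_expJensenGap m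

theorem bfun_sum_lower (a b c : ℝ) (ha : 0 < a) (hb : 0 < b) (hc : 0 < c) :
    bfun a b c + bfun c b a ≥ 0.08 * b * (Real.log (a * c / b ^ 2)) ^ 2 := by
  have hlog : log (√(a * c) / b) = log (a * c / b ^ 2) / 2 := by
    rw [← log_sqrt (by positivity), sqrt_div' _ (by positivity), sqrt_sq hb.le]
  calc 0.08 * b * log (a * c / b ^ 2) ^ 2
      = 2 * (0.16 * b * log (√(a * c) / b) ^ 2) := by rw [hlog]; ring
    _ ≤ 2 * bfun √(a * c) b √(a * c) := by
        gcongr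
        exact mul_log_sq_le_bfun_self (by positivity) hb
    _ ≤ bfun a b c + bfun c b a := two_mul_bfun_sqrt_le ha hb hc
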